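/- Let d ∈ ℕ, α > 0, and let L : ℝ^d → ℝ be bounded below with infimum L̲ := inf L, satisfy L(θ) − L̲ ≤ C_L(1 + |θ|²) for all θ ∈ ℝ^d (for some C_L > 0), and have quadratic growth at infinity: there exist M > 0 and c_q > 0 such that L(θ) − L̲ ≥ c_q |θ|² for all |θ| ≥ M. Then for every Borel probability measure μ on ℝ^d with finite second moment, the reweighted measure η^α := w_L^α μ / ∫ w_L^α dμ satisfies ∫ |θ|² dη^α(θ) ≤ b₁ + b₂ ∫ |θ|² dμ(θ), where b₂ := 2 (C_L / c_q)(1 + 1/(α c_q M²)) and b₁ := M² + b₂. -/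

import Mathlib

/-!
Write `f = L - inf L ≥ 0`. Quadratic growth gives `‖θ‖² ≤ M² + f / c_q` everywhere, so it suffices
to bound the mean of `f` under the Gibbs measure. The weight `exp (-α L)` is a decreasing function
of `f`, so Chebyshev's association inequality (`integral_mul_exp_neg_le`) shows that reweighting
does not increase this mean: `∫ f dη ≤ ∫ f dμ`. The upper bound on `L` then gives
`∫ f dμ ≤ C_L (1 + ∫ ‖θ‖² dμ)`. This proves the estimate with `C_L / c_q` in place of `b₂`, and
`C_L / c_q ≤ b₂`.
-/

open MeasureTheory Real Set

/-- The reweighted (Gibbs) measure `η^α = w_L^α μ / ‖w_L^α‖_{L¹(μ)}` where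
`w_L^α(θ) = exp(-α L(θ))`. -/
noncomputable def gibbsMeasure {d : ℕ} (α : ℝ) (L : EuclideanSpace ℝ (Fin d) → ℝ)
    (μ : Measure (EuclideanSpace ℝ (Fin d))) : Measure (EuclideanSpace ℝ (Fin d)) :=
  (∫⁻ θ, ENNReal.ofReal (Real.exp (-α * L θ)) ∂μ)⁻¹ •
    μ.withDensity (fun θ => ENNReal.ofReal (Real.exp (-α * L θ)))

/-- The Gibbs mean as a quotient of real integrals. Both sides are `0` if `g` is not integrable
with respect to the Gibbs measure. -/
lemma integral_gibbsMeasure {d : ℕ} (α : ℝ) (L : EuclideanSpace ℝ (Fin d) → ℝ)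
    (hL : Measurable L) (μ : Measure (EuclideanSpace ℝ (Fin d)))
    (hw : Integrable (fun θ => Real.exp (-α * L θ)) μ) (g : EuclideanSpace ℝ (Fin d) → ℝ) :
    ∫ θ, g θ ∂(gibbsMeasure α L μ) =
      (∫ θ, Real.exp (-α * L θ) ∂μ)⁻¹ * ∫ θ, g θ * Real.exp (-α * L θ) ∂μ := by
  have hmeas : Measurable fun θ => ENNReal.ofReal (Real.exp (-α * L θ)) := by fun_prop
  rw [gibbsMeasure, integral_smul_measure,
    integral_withDensity_eq_integral_toReal_smul hmeas (by simp),
    ← ofReal_integral_eq_lintegral_ofReal hw (ae_of_all _ fun θ => (Real.exp_pos _).le),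
    ENNReal.toReal_inv, ENNReal.toReal_ofReal (integral_nonneg fun θ => (Real.exp_pos _).le)]
  simp only [ENNReal.toReal_ofReal (Real.exp_pos _).le, smul_eq_mul]
  simp only [mul_comm]

/-- Chebyshev's association inequality for `f` and the decreasing function `exp (-α (f + c))`
of `f`. -/
lemma integral_mul_exp_neg_le {Ω : Type*} [MeasurableSpace Ω] (μ : Measure Ω)
    [IsProbabilityMeasure μ] (α c : ℝ) (hα : 0 < α) (f : Ω → ℝ) (hf : Integrable f μ)
    (hw : Integrable (fun x => Real.exp (-α * (f x + c))) μ)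
    (hfw : Integrable (fun x => f x * Real.exp (-α * (f x + c))) μ) :
    ∫ x, f x * Real.exp (-α * (f x + c)) ∂μ ≤
      (∫ x, f x ∂μ) * ∫ x, Real.exp (-α * (f x + c)) ∂μ := by
  set m := ∫ x, f x ∂μ with hm
  have hpt : ∀ x, f x * Real.exp (-α * (f x + c)) ≤
      m * Real.exp (-α * (f x + c)) + Real.exp (-α * (m + c)) * (f x - m) := by
    intro x
    rcases le_total (f x) m with h | h
    · have : Real.exp (-α * (m + c)) ≤ Real.exp (-α * (f x + c)) :=
        Real.exp_le_exp.2 (by nlinarith)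
      nlinarith
    · have : Real.exp (-α * (f x + c)) ≤ Real.exp (-α * (m + c)) :=
        Real.exp_le_exp.2 (by nlinarith)
      nlinarith
  have hsub : Integrable (fun x => f x - m) μ := hf.sub (integrable_const m)
  have h := integral_mono hfw ((hw.const_mul m).add (hsub.const_mul (Real.exp (-α * (m + c))))) hpt
  -- The correction term is a multiple of `f - m`, which has mean zero.
  have h0 : ∫ x, (f x - m) ∂μ = 0 := by
    rw [integral_sub hf (integrable_const m)]; simp [hm]
  rw [integral_add' (hw.const_mul m) (hsub.const_mul _), integral_const_mul, integral_const_mul,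
    h0] at h
  simpa using h

/-- if `L` is bounded below with infimum `L̲`, satisfies the quadratic upper bound
`L(θ) - L̲ ≤ C_L (1 + |θ|²)` and quadratic growth at infinity
(`L(θ) - L̲ ≥ c_q |θ|²` for `|θ| ≥ M`), then for every Borel probability measure `μ`
with finite second moment, `∫ |θ|² dη^α ≤ b₁ + b₂ ∫ |θ|² dμ` with
`b₂ = 2 (C_L / c_q)(1 + 1/(α c_q M²))` and `b₁ = M² + b₂`. -/
theorem gibbs_second_moment_le {d : ℕ} (α CL cq M : ℝ)
    (hα : 0 < α) (hCL : 0 < CL) (hcq : 0 < cq) (hM : 0 < M)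
    (L : EuclideanSpace ℝ (Fin d) → ℝ) (hLmeas : Measurable L)
    (hbddBelow : BddBelow (Set.range L))
    (hgrowth : ∀ θ, L θ - sInf (Set.range L) ≤ CL * (1 + ‖θ‖ ^ 2))
    (hquad : ∀ θ : EuclideanSpace ℝ (Fin d), M ≤ ‖θ‖ →
      cq * ‖θ‖ ^ 2 ≤ L θ - sInf (Set.range L))
    (μ : Measure (EuclideanSpace ℝ (Fin d))) [IsProbabilityMeasure μ]
    (hmom : Integrable (fun θ => ‖θ‖ ^ 2) μ) :
    ∫ θ, ‖θ‖ ^ 2 ∂(gibbsMeasure α L μ) ≤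
      (M ^ 2 + 2 * (CL / cq) * (1 + 1 / (α * cq * M ^ 2)))
        + (2 * (CL / cq) * (1 + 1 / (α * cq * M ^ 2))) * ∫ θ, ‖θ‖ ^ 2 ∂μ := by
  set l := sInf (Set.range L) with hl
  have hlow : ∀ θ, l ≤ L θ := fun θ => csInf_le hbddBelow ⟨θ, rfl⟩
  have hb : ∀ θ, Real.exp (-α * L θ) ≤ Real.exp (-α * l) := fun θ =>
    Real.exp_le_exp.2 (by nlinarith [hlow θ])
  have hwm : AEStronglyMeasurable (fun θ => Real.exp (-α * L θ)) μ :=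
    (by fun_prop : Measurable fun θ => Real.exp (-α * L θ)).aestronglyMeasurable
  have hbn : ∀ᵐ θ ∂μ, ‖Real.exp (-α * L θ)‖ ≤ Real.exp (-α * l) := ae_of_all _ fun θ => by
    rw [Real.norm_of_nonneg (Real.exp_pos _).le]; exact hb θ
  have hw : Integrable (fun θ => Real.exp (-α * L θ)) μ := Integrable.of_bound hwm _ hbn
  have hup : Integrable (fun θ => CL * (1 + ‖θ‖ ^ 2)) μ :=
    ((integrable_const (1 : ℝ)).add hmom).const_mul CL
  have hf : Integrable (fun θ => L θ - l) μ := by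
    refine hup.mono' (hLmeas.sub_const l).aestronglyMeasurable (ae_of_all _ fun θ => ?_)
    rw [Real.norm_of_nonneg (sub_nonneg.2 (hlow θ))]
    exact hgrowth θ
  have hfw : Integrable (fun θ => (L θ - l) * Real.exp (-α * L θ)) μ := hf.mul_bdd hwm hbn
  have hxw : Integrable (fun θ => ‖θ‖ ^ 2 * Real.exp (-α * L θ)) μ := hmom.mul_bdd hwm hbn
  have hZ : 0 < ∫ θ, Real.exp (-α * L θ) ∂μ := integral_exp_pos hw
  have hcheb : ∫ θ, (L θ - l) * Real.exp (-α * L θ) ∂μ ≤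
      (∫ θ, (L θ - l) ∂μ) * ∫ θ, Real.exp (-α * L θ) ∂μ := by
    have h := integral_mul_exp_neg_le μ α l hα (fun θ => L θ - l) hf
    simp only [sub_add_cancel] at h
    exact h hw hfw
  have hmean : ∫ θ, (L θ - l) ∂μ ≤ CL * (1 + ∫ θ, ‖θ‖ ^ 2 ∂μ) := by
    refine (integral_mono hf hup hgrowth).trans_eq ?_
    rw [integral_const_mul, integral_add (integrable_const _) hmom]
    simp
  have hpt : ∀ θ : EuclideanSpace ℝ (Fin d), ‖θ‖ ^ 2 ≤ M ^ 2 + cq⁻¹ * (L θ - l) := by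
    intro θ
    have hf0 : 0 ≤ cq⁻¹ * (L θ - l) := mul_nonneg (inv_pos.2 hcq).le (sub_nonneg.2 (hlow θ))
    rcases le_total M ‖θ‖ with h | h
    · have := (le_inv_mul_iff₀ hcq).2 (hquad θ h)
      nlinarith [sq_nonneg M]
    · have : ‖θ‖ ^ 2 ≤ M ^ 2 := by gcongr
      linarith
  have hint : ∫ θ, ‖θ‖ ^ 2 * Real.exp (-α * L θ) ∂μ ≤
      M ^ 2 * (∫ θ, Real.exp (-α * L θ) ∂μ) +
        cq⁻¹ * ∫ θ, (L θ - l) * Real.exp (-α * L θ) ∂μ := by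
    rw [← integral_const_mul, ← integral_const_mul,
      ← integral_add (hw.const_mul _) (hfw.const_mul _)]
    refine integral_mono hxw ((hw.const_mul _).add (hfw.const_mul _)) fun θ => ?_
    have := mul_le_mul_of_nonneg_right (hpt θ) (Real.exp_pos (-α * L θ)).le
    simp only
    linarith
  have hS : 0 ≤ ∫ θ, ‖θ‖ ^ 2 ∂μ := integral_nonneg fun θ => by positivity
  have hb2 : CL / cq ≤ 2 * (CL / cq) * (1 + 1 / (α * cq * M ^ 2)) := by
    have h1 : 0 < CL / cq := by positivity
    have h2 : 0 < 1 / (α * cq * M ^ 2) := by positivity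
    nlinarith [mul_pos h1 h2]
  rw [integral_gibbsMeasure α L hLmeas μ hw, inv_mul_le_iff₀ hZ]
  set Z := ∫ θ, Real.exp (-α * L θ) ∂μ
  set S := ∫ θ, ‖θ‖ ^ 2 ∂μ
  set b := 2 * (CL / cq) * (1 + 1 / (α * cq * M ^ 2))
  calc _ ≤ M ^ 2 * Z + cq⁻¹ * ((CL * (1 + S)) * Z) := by
        refine hint.trans ?_
        gcongr
        exact hcheb.trans (by gcongr)
    _ = Z * (M ^ 2 + CL / cq * (1 + S)) := by ring
    _ ≤ Z * (M ^ 2 + b * (1 + S)) := by gcongr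
    _ = _ := by ring
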